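/- arXiv:1812.02267 — 4 statements merged into one kernel-verified Lean document; each statement's English description precedes it below -/
import Mathlib

section
/- Let β ∈ ℝ, let a, b, c, d ∈ (0,∞) with a < b and c < d, and let p ∈ [1,∞). Let f be a non-negative measurable function on (0,∞). Then (∫_a^b (∫_{x+c}^{x+d} x^β f(y) dy)^p dx)^{1/p} ≤ C (∫_{a+c}^{b+d} (f(x) x^{β+1})^p dx)^{1/p}, where C = ∫_{1+c/b}^{1+d/a} t^{-(β+1+1/p)} dt. -/
open MeasureTheory
open scoped ENNReal

/-!
Substituting `y = x t` bounds the inner integral by `∫ t ^ (-(β + 1)) h(t x) dt`, where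
`h(u) = f(u) u ^ (β + 1)` is cut off to `(a + c, b + d)` and `t` ranges over a fixed interval.
Minkowski's integral inequality bounds the `L^p` norm of this average of dilates by the average of
the norms, and the dilate `h(t ·)` has norm `t ^ (-1 / p) ‖h‖_p`.
-/

section Minkowski

variable {α γ : Type*} [MeasurableSpace α] [MeasurableSpace γ]
  {μ : Measure α} {ν : Measure γ} {p : ℝ}

lemma rpow_lintegral_le_mul_lintegral_weight (hp : 1 ≤ p) {f w : α → ℝ≥0∞}
    (hf : AEMeasurable f μ) (hw : AEMeasurable w μ) (hw_top : ∀ᵐ x ∂μ, w x ≠ ∞)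
    (hfw : ∀ᵐ x ∂μ, w x = 0 → f x = 0) :
    (∫⁻ x, f x ∂μ) ^ p ≤ (∫⁻ x, w x ∂μ) ^ (p - 1) * ∫⁻ x, w x ^ (1 - p) * f x ^ p ∂μ := by
  have hp0 : 0 < p := by linarith
  have f_eq : ∀ᵐ x ∂μ, f x = (w x ^ (1 - p) * f x ^ p) ^ p⁻¹ * w x ^ (1 - p⁻¹) := by
    filter_upwards [hw_top, hfw] with x hx_top hx
    rcases eq_or_ne (w x) 0 with hx0 | hx0
    · simp [hx hx0, hp0]
    · rw [ENNReal.mul_rpow_of_nonneg _ _ (by positivity), ← ENNReal.rpow_mul,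
        ENNReal.rpow_rpow_inv hp0.ne', mul_right_comm, ← ENNReal.rpow_add _ _ hx0 hx_top,
        show (1 - p) * p⁻¹ + (1 - p⁻¹) = 0 by field_simp; ring, ENNReal.rpow_zero, one_mul]
  have holder : ∫⁻ x, f x ∂μ ≤
      (∫⁻ x, w x ^ (1 - p) * f x ^ p ∂μ) ^ p⁻¹ * (∫⁻ x, w x ∂μ) ^ (1 - p⁻¹) :=
    (lintegral_congr_ae f_eq).trans_le <|
      ENNReal.lintegral_mul_norm_pow_le (by fun_prop) hw (by positivity)
        (sub_nonneg.2 <| inv_le_one_of_one_le₀ hp) (by ring)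
  calc (∫⁻ x, f x ∂μ) ^ p
      ≤ ((∫⁻ x, w x ^ (1 - p) * f x ^ p ∂μ) ^ p⁻¹ * (∫⁻ x, w x ∂μ) ^ (1 - p⁻¹)) ^ p := by gcongr
    _ = (∫⁻ x, w x ∂μ) ^ (p - 1) * ∫⁻ x, w x ^ (1 - p) * f x ^ p ∂μ := by
      rw [ENNReal.mul_rpow_of_nonneg _ _ hp0.le, ENNReal.rpow_inv_rpow hp0.ne',
        ← ENNReal.rpow_mul, sub_mul, inv_mul_cancel₀ hp0.ne', one_mul, mul_comm]

lemma rpow_one_sub_mul_rpow_le (p : ℝ) (x : ℝ≥0∞) : x ^ (1 - p) * x ^ p ≤ x := by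
  rcases eq_or_ne x 0 with rfl | hx0
  · rcases lt_or_ge 0 p with hp | hp
    · simp [hp]
    · simp [show 0 < 1 - p by linarith]
  rcases eq_or_ne x ∞ with rfl | hx_top
  · exact le_top
  · rw [← ENNReal.rpow_add _ _ hx0 hx_top, sub_add_cancel, ENNReal.rpow_one]

lemma rpow_sub_one_mul_self (hp : 1 ≤ p) (x : ℝ≥0∞) : x ^ (p - 1) * x = x ^ p := by
  simpa using (ENNReal.rpow_add_of_nonneg (x := x) _ _ (sub_nonneg.2 hp) zero_le_one).symm

lemma ae_ae_eq_zero_of_lintegral_rpow_eq_zero [SFinite μ] [SFinite ν] (hp : 0 < p)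
    {f : α → γ → ℝ≥0∞} (hf : Measurable (Function.uncurry f)) :
    ∀ᵐ x ∂μ, ∀ᵐ t ∂ν, ∫⁻ x', f x' t ^ p ∂μ = 0 → f x t = 0 := by
  have h_meas : Measurable fun t ↦ ∫⁻ x', f x' t ^ p ∂μ :=
    (hf.pow_const p).lintegral_prod_left'
  have h_set : MeasurableSet {q : α × γ | ∫⁻ x', f x' q.2 ^ p ∂μ = 0 → f q.1 q.2 = 0} :=
    (h_meas.comp measurable_snd (measurableSet_singleton 0)).imp (hf (measurableSet_singleton 0))
  refine (Measure.ae_ae_comm h_set).2 (.of_forall fun t ↦ ?_)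
  by_cases ht : ∫⁻ x', f x' t ^ p ∂μ = 0
  · filter_upwards [ENNReal.ae_eq_zero_of_lintegral_rpow_eq_zero hp.le
      (hf.of_uncurry_right (y := t)).aemeasurable ht] with x hx _ using hx
  · simp [ht]

theorem Lp_lintegral_le_lintegral_Lp [SFinite μ] [SFinite ν] (hp : 1 ≤ p)
    {f : α → γ → ℝ≥0∞} (hf : Measurable (Function.uncurry f)) :
    (∫⁻ x, (∫⁻ t, f x t ∂ν) ^ p ∂μ) ^ (1 / p) ≤ ∫⁻ t, (∫⁻ x, f x t ^ p ∂μ) ^ (1 / p) ∂ν := by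
  have hp0 : 0 < p := by linarith
  -- Hölder against this weight turns the left-hand side into a double integral, to which Tonelli
  -- applies.
  set w : γ → ℝ≥0∞ := fun t ↦ (∫⁻ x, f x t ^ p ∂μ) ^ (1 / p) with w_def
  have w_rpow (t : γ) : w t ^ p = ∫⁻ x, f x t ^ p ∂μ := by
    rw [w_def, one_div, ENNReal.rpow_inv_rpow hp0.ne']
  have hw : Measurable w := (hf.pow_const p).lintegral_prod_left'.pow_const _
  have hwf : Measurable fun q : α × γ ↦ w q.2 ^ (1 - p) * f q.1 q.2 ^ p :=
    ((hw.comp measurable_snd).pow_const _).mul (hf.pow_const p)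
  rcases eq_or_ne (∫⁻ t, w t ∂ν) ∞ with hW | hW
  · simp [hW]
  rw [one_div, ENNReal.rpow_inv_le_iff hp0]
  calc ∫⁻ x, (∫⁻ t, f x t ∂ν) ^ p ∂μ
      ≤ ∫⁻ x, (∫⁻ t, w t ∂ν) ^ (p - 1) * ∫⁻ t, w t ^ (1 - p) * f x t ^ p ∂ν ∂μ := by
        refine lintegral_mono_ae ?_
        filter_upwards [ae_ae_eq_zero_of_lintegral_rpow_eq_zero (ν := ν) hp0 hf] with x hx
        refine rpow_lintegral_le_mul_lintegral_weight hp
          (hf.of_uncurry_left (x := x)).aemeasurable hw.aemeasurable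
          ((ae_lt_top hw hW).mono fun _ h ↦ h.ne) ?_
        filter_upwards [hx] with t ht hwt
        exact ht (by rw [← w_rpow, hwt, ENNReal.zero_rpow_of_pos hp0])
    _ = (∫⁻ t, w t ∂ν) ^ (p - 1) * ∫⁻ t, ∫⁻ x, w t ^ (1 - p) * f x t ^ p ∂μ ∂ν := by
        rw [lintegral_const_mul _ hwf.lintegral_prod_right',
          lintegral_lintegral_swap hwf.aemeasurable]
    _ = (∫⁻ t, w t ∂ν) ^ (p - 1) * ∫⁻ t, w t ^ (1 - p) * w t ^ p ∂ν := by
        congr! 3 with t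
        rw [w_rpow, lintegral_const_mul _ ((hf.of_uncurry_right (y := t)).pow_const p)]
    _ ≤ (∫⁻ t, w t ∂ν) ^ (p - 1) * ∫⁻ t, w t ∂ν := by
        gcongr with t
        exact rpow_one_sub_mul_rpow_le p _
    _ = (∫⁻ t, w t ∂ν) ^ p := rpow_sub_one_mul_self hp _

end Minkowski

section Dilation

lemma lintegral_comp_mul_left {r : ℝ} (hr : r ≠ 0) (g : ℝ → ℝ≥0∞) :
    ∫⁻ x, g (r * x) = ENNReal.ofReal |r|⁻¹ * ∫⁻ x, g x := by
  calc ∫⁻ x, g (r * x) = ∫⁻ x, g x ∂(volume.map (r * ·)) :=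
        (lintegral_map_equiv g (Homeomorph.mulLeft₀ r hr).toMeasurableEquiv).symm
    _ = ENNReal.ofReal |r|⁻¹ * ∫⁻ x, g x := by
        rw [Real.map_volume_mul_left hr, lintegral_smul_measure, abs_inv, smul_eq_mul]

lemma Lp_comp_mul_left {r : ℝ} (hr : r ≠ 0) {p : ℝ} (hp : 0 ≤ p) (g : ℝ → ℝ≥0∞) :
    (∫⁻ x, g (r * x) ^ p) ^ (1 / p) =
      ENNReal.ofReal (|r| ^ (-(1 / p))) * (∫⁻ x, g x ^ p) ^ (1 / p) := by
  rw [lintegral_comp_mul_left hr (g · ^ p), ENNReal.mul_rpow_of_nonneg _ _ (by positivity),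
    ENNReal.ofReal_rpow_of_pos (by positivity), Real.inv_rpow (abs_nonneg r),
    Real.rpow_neg (abs_nonneg r)]

theorem Lp_lintegral_dilation_le {ν : Measure ℝ} [SFinite ν]
    (hν : ∀ᵐ t ∂ν, t ≠ 0) {p : ℝ} (hp : 1 ≤ p) {k g : ℝ → ℝ≥0∞} (hk : Measurable k)
    (hg : Measurable g) :
    (∫⁻ x, (∫⁻ t, k t * g (x * t) ∂ν) ^ p) ^ (1 / p) ≤
      (∫⁻ t, k t * ENNReal.ofReal (|t| ^ (-(1 / p))) ∂ν) * (∫⁻ x, g x ^ p) ^ (1 / p) := by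
  have hp0 : 0 < p := by linarith
  calc (∫⁻ x, (∫⁻ t, k t * g (x * t) ∂ν) ^ p) ^ (1 / p)
      ≤ ∫⁻ t, (∫⁻ x, (k t * g (x * t)) ^ p) ^ (1 / p) ∂ν :=
        Lp_lintegral_le_lintegral_Lp hp (by fun_prop)
    _ = ∫⁻ t, k t * ENNReal.ofReal (|t| ^ (-(1 / p))) * (∫⁻ x, g x ^ p) ^ (1 / p) ∂ν := by
        refine lintegral_congr_ae ?_
        filter_upwards [hν] with t ht
        simp_rw [mul_comm _ t, ENNReal.mul_rpow_of_nonneg _ _ hp0.le]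
        rw [lintegral_const_mul _ (by fun_prop), ENNReal.mul_rpow_of_nonneg _ _ (by positivity),
          one_div, ENNReal.rpow_rpow_inv hp0.ne', ← one_div,
          Lp_comp_mul_left ht hp0.le, mul_assoc]
    _ = (∫⁻ t, k t * ENNReal.ofReal (|t| ^ (-(1 / p))) ∂ν) * (∫⁻ x, g x ^ p) ^ (1 / p) :=
        lintegral_mul_const _ (by fun_prop)

lemma ofReal_setIntegral_Ioo_rpow {u : ℝ} (hu : 0 < u) (v s : ℝ) :
    ENNReal.ofReal (∫ t in Set.Ioo u v, t ^ s) = ∫⁻ t in Set.Ioo u v, ENNReal.ofReal (t ^ s) := by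
  have h_cont : ContinuousOn (fun t : ℝ ↦ t ^ s) (Set.Icc u v) :=
    continuousOn_id.rpow_const fun t ht ↦ .inl (hu.trans_le ht.1).ne'
  refine ofReal_integral_eq_lintegral_ofReal
    (h_cont.integrableOn_Icc.mono_set Set.Ioo_subset_Icc_self) ?_
  filter_upwards [ae_restrict_mem measurableSet_Ioo] with t ht
  exact Real.rpow_nonneg (hu.trans ht.1).le s

lemma setLIntegral_Ioo_rpow_mul_abs_rpow {u : ℝ} (hu : 0 < u) (v r s : ℝ) :
    ∫⁻ t in Set.Ioo u v, ENNReal.ofReal (t ^ r) * ENNReal.ofReal (|t| ^ s) =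
      ENNReal.ofReal (∫ t in Set.Ioo u v, t ^ (r + s)) := by
  rw [ofReal_setIntegral_Ioo_rpow hu]
  refine setLIntegral_congr_fun measurableSet_Ioo fun t ht ↦ ?_
  have ht0 : 0 < t := hu.trans ht.1
  simp only [abs_of_pos ht0, Real.rpow_add ht0]
  exact (ENNReal.ofReal_mul (by positivity)).symm

end Dilation

section MovingWindow

variable {a b c d x t β : ℝ}

lemma mem_Ioo_of_mul_mem_Ioo_add (ha : 0 < a) (hc : 0 ≤ c) (hx : x ∈ Set.Ioo a b)
    (hxt : x * t ∈ Set.Ioo (x + c) (x + d)) : t ∈ Set.Ioo (1 + c / b) (1 + d / a) := by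
  obtain ⟨hax, hxb⟩ := hx
  obtain ⟨hct, htd⟩ := hxt
  have hx0 : 0 < x := ha.trans hax
  have hd : 0 ≤ d := by linarith
  constructor
  · calc 1 + c / b ≤ 1 + c / x := by gcongr
      _ = (x + c) / x := by field_simp
      _ < t := (div_lt_iff₀' hx0).2 hct
  · calc t < (x + d) / x := (lt_div_iff₀' hx0).2 htd
      _ = 1 + d / x := by field_simp
      _ ≤ 1 + d / a := by gcongr

lemma mul_rpow_eq_rpow_neg_mul_rpow_mul (hx : 0 < x) (ht : 0 < t) :
    x * x ^ β = t ^ (-(β + 1)) * (x * t) ^ (β + 1) := by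
  rw [Real.mul_rpow hx.le ht.le, mul_left_comm, ← Real.rpow_add ht, neg_add_cancel, Real.rpow_zero,
    mul_one, Real.rpow_add_one hx.ne', mul_comm]

lemma ofReal_mul_ofReal_rpow_mul_eq (hx : 0 < x) (ht : 0 < t) (f : ℝ → ℝ≥0∞) :
    ENNReal.ofReal x * (ENNReal.ofReal (x ^ β) * f (x * t)) =
      ENNReal.ofReal (t ^ (-(β + 1))) * (f (x * t) * ENNReal.ofReal ((x * t) ^ (β + 1))) := by
  rw [← mul_assoc, ← ENNReal.ofReal_mul hx.le, mul_rpow_eq_rpow_neg_mul_rpow_mul hx ht,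
    ENNReal.ofReal_mul (by positivity), mul_assoc, mul_comm (f _)]

lemma setLIntegral_Ioo_add_le_setLIntegral_dilation (ha : 0 < a) (hb : 0 < b) (hc : 0 ≤ c)
    (hx : x ∈ Set.Ioo a b) (f : ℝ → ℝ≥0∞) :
    ∫⁻ y in Set.Ioo (x + c) (x + d), ENNReal.ofReal (x ^ β) * f y ≤
      ∫⁻ t in Set.Ioo (1 + c / b) (1 + d / a), ENNReal.ofReal (t ^ (-(β + 1))) *
        (Set.Ioo (a + c) (b + d)).indicator
          (fun u ↦ f u * ENNReal.ofReal (u ^ (β + 1))) (x * t) := by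
  have hx0 : 0 < x := ha.trans hx.1
  set window : ℝ → ℝ≥0∞ := (Set.Ioo (x + c) (x + d)).indicator
    fun y ↦ ENNReal.ofReal (x ^ β) * f y with window_def
  calc ∫⁻ y in Set.Ioo (x + c) (x + d), ENNReal.ofReal (x ^ β) * f y
      = ENNReal.ofReal x * ∫⁻ t, window (x * t) := by
        rw [lintegral_comp_mul_left hx0.ne', abs_of_pos hx0, ← mul_assoc,
          ← ENNReal.ofReal_mul hx0.le, mul_inv_cancel₀ hx0.ne', ENNReal.ofReal_one, one_mul,
          lintegral_indicator measurableSet_Ioo]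
    _ = ∫⁻ t, ENNReal.ofReal x * window (x * t) :=
        (lintegral_const_mul' _ _ ENNReal.ofReal_ne_top).symm
    _ ≤ _ := by
        rw [← lintegral_indicator measurableSet_Ioo]
        refine lintegral_mono fun t ↦ ?_
        by_cases hxt : x * t ∈ Set.Ioo (x + c) (x + d)
        · have ht : t ∈ Set.Ioo (1 + c / b) (1 + d / a) := mem_Ioo_of_mul_mem_Ioo_add ha hc hx hxt
          have ht0 : 0 < t := lt_trans (by positivity) ht.1
          have hxt' : x * t ∈ Set.Ioo (a + c) (b + d) :=
            Set.Ioo_subset_Ioo (by linarith [hx.1]) (by linarith [hx.2]) hxt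
          rw [window_def, Set.indicator_of_mem hxt, Set.indicator_of_mem ht,
            Set.indicator_of_mem hxt', ofReal_mul_ofReal_rpow_mul_eq hx0 ht0]
        · simp [window_def, Set.indicator_of_notMem hxt]

lemma lintegral_indicator_rpow {α : Type*} [MeasurableSpace α] {μ : Measure α} {s : Set α}
    (hs : MeasurableSet s) {p : ℝ} (hp : 0 < p) (f : α → ℝ≥0∞) :
    ∫⁻ x, s.indicator f x ^ p ∂μ = ∫⁻ x in s, f x ^ p ∂μ := by
  rw [← lintegral_indicator hs]
  refine lintegral_congr fun x ↦ ?_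
  by_cases hx : x ∈ s <;> simp [hx, hp]

end MovingWindow

theorem stmt_0_general (β : ℝ) {a b c : ℝ} (ha : 0 < a) (hb : 0 < b) (hc : 0 ≤ c) (d : ℝ)
    {p : ℝ} (hp : 1 ≤ p) {f : ℝ → ℝ≥0∞} (hf : Measurable f) :
    (∫⁻ x in Set.Ioo a b,
        (∫⁻ y in Set.Ioo (x + c) (x + d), ENNReal.ofReal (x ^ β) * f y) ^ p) ^ (1 / p) ≤
      ENNReal.ofReal (∫ t in Set.Ioo (1 + c / b) (1 + d / a), t ^ (-(β + 1 + 1 / p))) *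
        (∫⁻ x in Set.Ioo (a + c) (b + d), (f x * ENNReal.ofReal (x ^ (β + 1))) ^ p) ^ (1 / p) := by
  have hp0 : 0 < p := by linarith
  have hcb : 0 < 1 + c / b := by positivity
  set T := Set.Ioo (1 + c / b) (1 + d / a)
  set h : ℝ → ℝ≥0∞ := (Set.Ioo (a + c) (b + d)).indicator
    fun u ↦ f u * ENNReal.ofReal (u ^ (β + 1))
  have T_ne_zero : ∀ᵐ t ∂volume.restrict T, t ≠ 0 := by
    filter_upwards [ae_restrict_mem measurableSet_Ioo] with t ht using (hcb.trans ht.1).ne'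
  calc _ ≤ (∫⁻ x in Set.Ioo a b,
          (∫⁻ t in T, ENNReal.ofReal (t ^ (-(β + 1))) * h (x * t)) ^ p) ^ (1 / p) := by
        gcongr ?_ ^ (1 / p)
        refine setLIntegral_mono' measurableSet_Ioo fun x hx ↦ ?_
        gcongr ?_ ^ p
        exact setLIntegral_Ioo_add_le_setLIntegral_dilation ha hb hc hx f
    _ ≤ (∫⁻ x, (∫⁻ t in T, ENNReal.ofReal (t ^ (-(β + 1))) * h (x * t)) ^ p) ^ (1 / p) := by
        gcongr
        exact Measure.restrict_le_self
    _ ≤ _ := Lp_lintegral_dilation_le T_ne_zero hp (by fun_prop)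
        (.indicator (by fun_prop) measurableSet_Ioo)
    _ = _ := by
        rw [setLIntegral_Ioo_rpow_mul_abs_rpow hcb, ← neg_add,
          lintegral_indicator_rpow measurableSet_Ioo hp0]

/-- **Hardy-type inequality.** Let `β ∈ ℝ`, `a, b, c, d ∈ (0,∞)` with
`a < b`, `c < d`, and `p ∈ [1,∞)`. For every non-negative measurable `f` on `(0,∞)`,
`(∫_a^b (∫_{x+c}^{x+d} x^β f(y) dy)^p dx)^{1/p}
  ≤ C (∫_{a+c}^{b+d} (f(x) x^{β+1})^p dx)^{1/p}`,
where `C = ∫_{1+c/b}^{1+d/a} t^{-(β+1+1/p)} dt`.  Both sides are interpreted in `ℝ≥0∞`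
via Lebesgue integrals. -/
theorem stmt_0 (β : ℝ) (a b c d : ℝ) (ha : 0 < a) (hb : 0 < b) (hc : 0 < c) (hd : 0 < d)
    (hab : a < b) (hcd : c < d) (p : ℝ) (hp : 1 ≤ p)
    (f : ℝ → ℝ) (hf : Measurable f) (hf0 : ∀ x ∈ Set.Ioi (0 : ℝ), 0 ≤ f x) :
    (∫⁻ x in Set.Ioo a b,
        (∫⁻ y in Set.Ioo (x + c) (x + d),
          ENNReal.ofReal (x ^ β) * ENNReal.ofReal (f y)) ^ p) ^ (1 / p) ≤
      ENNReal.ofReal (∫ t in Set.Ioo (1 + c / b) (1 + d / a), t ^ (-(β + 1 + 1 / p))) *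
        (∫⁻ x in Set.Ioo (a + c) (b + d),
          ENNReal.ofReal (f x * x ^ (β + 1)) ^ p) ^ (1 / p) := by
  refine (stmt_0_general β ha hb hc.le d hp hf.ennreal_ofReal).trans_eq ?_
  congr 2
  exact setLIntegral_congr_fun measurableSet_Ioo fun x hx ↦ by
    simp only [ENNReal.ofReal_mul (hf0 x ((add_pos ha hc).trans hx.1))]
end

section
/- Let β > -1/p with p ∈ [1,∞), and let f be a non-negative measurable function on (0,∞). Then (∫_0^∞ (∫_x^∞ x^β f(y) dy)^p dx)^{1/p} ≤ (p/(βp+1)) (∫_0^∞ (f(x) x^{β+1})^p dx)^{1/p}. -/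
open MeasureTheory
open scoped ENNReal

open Set

/-!
Split the inner integrand as `f y = w y * (f y / w y)` with the weight `w y = y ^ (-1 - a)`, where
`a = β + 1 / p`. Hölder's inequality for the measure `w y dy` on `(x, ∞)` moves the power `p`
inside the inner integral, at the cost of a factor `(∫_x^∞ w) ^ (p - 1)`, which is a power of `x`.
By Tonelli's theorem it remains to integrate a power of `x` over `(0, y)`. The two power integrals
contribute `a ^ (1 - p)` and `a ^ (-1)`, hence the constant `a⁻¹ = p / (β p + 1)` after taking
`p`-th roots.
-/

theorem rpow_lintegral_mul_le {α : Type*} [MeasurableSpace α] {μ : Measure α}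
    {w g : α → ℝ≥0∞} (hw : AEMeasurable w μ) (hg : AEMeasurable g μ) {p : ℝ} (hp : 1 ≤ p) :
    (∫⁻ x, w x * g x ∂μ) ^ p ≤ (∫⁻ x, w x ∂μ) ^ (p - 1) * ∫⁻ x, w x * g x ^ p ∂μ := by
  have hp0 : 0 < p := by positivity
  have hinv : 0 ≤ 1 - p⁻¹ := sub_nonneg.2 (inv_le_one_of_one_le₀ hp)
  have split (x : α) : w x * g x = w x ^ (1 - p⁻¹) * (w x * g x ^ p) ^ p⁻¹ := by
    rw [ENNReal.mul_rpow_of_nonneg _ _ (by positivity), ENNReal.rpow_rpow_inv hp0.ne', ← mul_assoc,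
      ← ENNReal.rpow_add_of_nonneg _ _ hinv (by positivity), sub_add_cancel, ENNReal.rpow_one]
  have holder : ∫⁻ x, w x * g x ∂μ ≤
      (∫⁻ x, w x ∂μ) ^ (1 - p⁻¹) * (∫⁻ x, w x * g x ^ p ∂μ) ^ p⁻¹ := by
    simp_rw [split]
    exact ENNReal.lintegral_mul_norm_pow_le hw (hw.mul (hg.pow_const p)) hinv (by positivity)
      (sub_add_cancel _ _)
  calc (∫⁻ x, w x * g x ∂μ) ^ p
      ≤ ((∫⁻ x, w x ∂μ) ^ (1 - p⁻¹) * (∫⁻ x, w x * g x ^ p ∂μ) ^ p⁻¹) ^ p := by gcongr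
    _ = (∫⁻ x, w x ∂μ) ^ (p - 1) * ∫⁻ x, w x * g x ^ p ∂μ := by
      rw [ENNReal.mul_rpow_of_nonneg _ _ hp0.le, ENNReal.rpow_inv_rpow hp0.ne',
        ← ENNReal.rpow_mul, sub_mul, one_mul, inv_mul_cancel₀ hp0.ne']

section TailIntegral

variable {α : Type*} [LinearOrder α] [TopologicalSpace α] [OrderClosedTopology α]
  [SecondCountableTopology α] [MeasurableSpace α] [BorelSpace α] {μ : Measure α} {a : α}

theorem lintegral_Ioi_lintegral_Ioi_swap [SFinite μ] {F : α → α → ℝ≥0∞}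
    (hF : AEMeasurable (Function.uncurry F) ((μ.restrict (Ioi a)).prod (μ.restrict (Ioi a)))) :
    ∫⁻ x in Ioi a, ∫⁻ y in Ioi x, F x y ∂μ ∂μ = ∫⁻ y in Ioi a, ∫⁻ x in Ioo a y, F x y ∂μ ∂μ := by
  have hlt : MeasurableSet {q : α × α | q.1 < q.2} := measurableSet_lt measurable_fst measurable_snd
  calc ∫⁻ x in Ioi a, ∫⁻ y in Ioi x, F x y ∂μ ∂μ
      = ∫⁻ x in Ioi a, ∫⁻ y in Ioi a, (Ioi x).indicator (F x) y ∂μ ∂μ := by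
        refine setLIntegral_congr_fun measurableSet_Ioi fun x hx => ?_
        rw [setLIntegral_indicator measurableSet_Ioi,
          inter_eq_left.2 (Ioi_subset_Ioi (le_of_lt hx))]
    _ = ∫⁻ y in Ioi a, ∫⁻ x in Ioi a, (Iio y).indicator (fun x => F x y) x ∂μ ∂μ :=
        lintegral_lintegral_swap (hF.indicator hlt)
    _ = ∫⁻ y in Ioi a, ∫⁻ x in Ioo a y, F x y ∂μ ∂μ := by
        simp_rw [setLIntegral_indicator measurableSet_Iio, Iio_inter_Ioi]

theorem lintegral_mul_rpow_lintegral_Ioi_le [SFinite μ] {u w g : α → ℝ≥0∞}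
    (hu : AEMeasurable u (μ.restrict (Ioi a))) (hw : AEMeasurable w (μ.restrict (Ioi a)))
    (hg : AEMeasurable g (μ.restrict (Ioi a))) {p : ℝ} (hp : 1 ≤ p) :
    ∫⁻ x in Ioi a, u x * (∫⁻ y in Ioi x, w y * g y ∂μ) ^ p ∂μ ≤
      ∫⁻ y in Ioi a,
        (∫⁻ x in Ioo a y, u x * (∫⁻ z in Ioi x, w z ∂μ) ^ (p - 1) ∂μ) * (w y * g y ^ p) ∂μ := by
  have htail : Measurable fun x => ∫⁻ z in Ioi x, w z ∂μ :=
    Antitone.measurable fun x y hxy => lintegral_mono_set (Ioi_subset_Ioi hxy)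
  have hU : AEMeasurable (fun x => u x * (∫⁻ z in Ioi x, w z ∂μ) ^ (p - 1)) (μ.restrict (Ioi a)) :=
    hu.mul (htail.pow_const _).aemeasurable
  have hG : AEMeasurable (fun y => w y * g y ^ p) (μ.restrict (Ioi a)) := hw.mul (hg.pow_const p)
  calc ∫⁻ x in Ioi a, u x * (∫⁻ y in Ioi x, w y * g y ∂μ) ^ p ∂μ
      ≤ ∫⁻ x in Ioi a, ∫⁻ y in Ioi x,
          u x * (∫⁻ z in Ioi x, w z ∂μ) ^ (p - 1) * (w y * g y ^ p) ∂μ ∂μ := by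
        refine setLIntegral_mono' measurableSet_Ioi fun x hx => ?_
        have hle : μ.restrict (Ioi x) ≤ μ.restrict (Ioi a) :=
          Measure.restrict_mono (Ioi_subset_Ioi (le_of_lt hx)) le_rfl
        rw [lintegral_const_mul'' _ (hG.mono_measure hle), mul_assoc]
        gcongr
        exact rpow_lintegral_mul_le (hw.mono_measure hle) (hg.mono_measure hle) hp
    _ = ∫⁻ y in Ioi a, ∫⁻ x in Ioo a y,
          u x * (∫⁻ z in Ioi x, w z ∂μ) ^ (p - 1) * (w y * g y ^ p) ∂μ ∂μ :=
        lintegral_Ioi_lintegral_Ioi_swap (hU.comp_fst.mul hG.comp_snd)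
    _ = _ := by
        refine lintegral_congr fun y => ?_
        rw [lintegral_mul_const'' _
          (hU.mono_measure (Measure.restrict_mono Ioo_subset_Ioi_self le_rfl))]

end TailIntegral

section PowerWeights

variable {a : ℝ}

theorem lintegral_Ioi_ofReal_rpow_neg_one_sub (ha : 0 < a) {x : ℝ} (hx : 0 < x) :
    ∫⁻ y in Ioi x, ENNReal.ofReal y ^ (-1 - a) =
      (ENNReal.ofReal a)⁻¹ * ENNReal.ofReal x ^ (-a) := by
  have hs : -1 - a < -1 := by linarith
  calc ∫⁻ y in Ioi x, ENNReal.ofReal y ^ (-1 - a)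
      = ∫⁻ y in Ioi x, ENNReal.ofReal (y ^ (-1 - a)) :=
        setLIntegral_congr_fun measurableSet_Ioi fun y hy =>
          ENNReal.ofReal_rpow_of_pos (hx.trans hy)
    _ = ENNReal.ofReal (∫ y in Ioi x, y ^ (-1 - a)) :=
        (ofReal_integral_eq_lintegral_ofReal (integrableOn_Ioi_rpow_of_lt hs hx)
          (ae_restrict_of_forall_mem measurableSet_Ioi fun y hy =>
            Real.rpow_nonneg (hx.trans hy).le _)).symm
    _ = ENNReal.ofReal (a⁻¹ * x ^ (-a)) := by
        rw [integral_Ioi_rpow_of_lt hs hx, show -1 - a + 1 = -a by ring, neg_div_neg_eq,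
          div_eq_inv_mul]
    _ = (ENNReal.ofReal a)⁻¹ * ENNReal.ofReal x ^ (-a) := by
        rw [ENNReal.ofReal_mul (by positivity), ENNReal.ofReal_inv_of_pos ha,
          ENNReal.ofReal_rpow_of_pos hx]

theorem lintegral_Ioo_zero_ofReal_rpow_sub_one (ha : 0 < a) {y : ℝ} (hy : 0 < y) :
    ∫⁻ x in Ioo 0 y, ENNReal.ofReal x ^ (a - 1) = (ENNReal.ofReal a)⁻¹ * ENNReal.ofReal y ^ a := by
  have hs : -1 < a - 1 := by linarith
  calc ∫⁻ x in Ioo 0 y, ENNReal.ofReal x ^ (a - 1)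
      = ∫⁻ x in Ioc 0 y, ENNReal.ofReal x ^ (a - 1) := setLIntegral_congr Ioo_ae_eq_Ioc
    _ = ∫⁻ x in Ioc 0 y, ENNReal.ofReal (x ^ (a - 1)) :=
        setLIntegral_congr_fun measurableSet_Ioc fun x hx => ENNReal.ofReal_rpow_of_pos hx.1
    _ = ENNReal.ofReal (∫ x in Ioc 0 y, x ^ (a - 1)) :=
        (ofReal_integral_eq_lintegral_ofReal
          (intervalIntegral.intervalIntegrable_rpow' hs).1
          (ae_restrict_of_forall_mem measurableSet_Ioc fun x hx =>
            Real.rpow_nonneg hx.1.le _)).symm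
    _ = ENNReal.ofReal (a⁻¹ * y ^ a) := by
        rw [← intervalIntegral.integral_of_le hy.le, integral_rpow (Or.inl hs), sub_add_cancel,
          Real.zero_rpow ha.ne', sub_zero, div_eq_inv_mul]
    _ = (ENNReal.ofReal a)⁻¹ * ENNReal.ofReal y ^ a := by
        rw [ENNReal.ofReal_mul (by positivity), ENNReal.ofReal_inv_of_pos ha,
          ENNReal.ofReal_rpow_of_pos hy]

theorem lintegral_Ioo_zero_rpow_mul_rpow_lintegral_Ioi (ha : 0 < a) (p : ℝ) {y : ℝ} (hy : 0 < y) :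
    ∫⁻ x in Ioo 0 y, ENNReal.ofReal x ^ (a * p - 1) *
        (∫⁻ z in Ioi x, ENNReal.ofReal z ^ (-1 - a)) ^ (p - 1) =
      (ENNReal.ofReal a)⁻¹ ^ p * ENNReal.ofReal y ^ a := by
  have ha0 : (ENNReal.ofReal a)⁻¹ ≠ 0 := ENNReal.inv_ne_zero.2 ENNReal.ofReal_ne_top
  have ha' : (ENNReal.ofReal a)⁻¹ ≠ ∞ := ENNReal.inv_ne_top.2 (ENNReal.ofReal_pos.2 ha).ne'
  have integrand : ∀ x ∈ Ioo 0 y, ENNReal.ofReal x ^ (a * p - 1) *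
        (∫⁻ z in Ioi x, ENNReal.ofReal z ^ (-1 - a)) ^ (p - 1) =
      (ENNReal.ofReal a)⁻¹ ^ (p - 1) * ENNReal.ofReal x ^ (a - 1) := fun x hx => by
    have hx0 : ENNReal.ofReal x ≠ 0 := (ENNReal.ofReal_pos.2 hx.1).ne'
    rw [lintegral_Ioi_ofReal_rpow_neg_one_sub ha hx.1, ENNReal.mul_rpow_of_ne_top ha'
      (ENNReal.rpow_ne_top_of_ne_zero hx0 ENNReal.ofReal_ne_top), ← ENNReal.rpow_mul,
      mul_left_comm, ← ENNReal.rpow_add _ _ hx0 ENNReal.ofReal_ne_top]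
    ring_nf
  rw [setLIntegral_congr_fun measurableSet_Ioo integrand, lintegral_const_mul _ (by fun_prop),
    lintegral_Ioo_zero_ofReal_rpow_sub_one ha hy, ← mul_assoc]
  nth_rw 2 [← ENNReal.rpow_one (ENNReal.ofReal a)⁻¹]
  rw [← ENNReal.rpow_add _ _ ha0 ha', sub_add_cancel]

theorem lintegral_rpow_mul_rpow_lintegral_Ioi_le (ha : 0 < a) {p : ℝ} (hp : 1 ≤ p) {f : ℝ → ℝ≥0∞}
    (hf : AEMeasurable f (volume.restrict (Ioi 0))) :
    ∫⁻ x in Ioi 0, ENNReal.ofReal x ^ (a * p - 1) * (∫⁻ y in Ioi x, f y) ^ p ≤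
      (ENNReal.ofReal a)⁻¹ ^ p *
        ∫⁻ x in Ioi 0, ENNReal.ofReal x ^ (a * p - 1) * (f x * ENNReal.ofReal x) ^ p := by
  have hp0 : 0 ≤ p := by positivity
  let w (y : ℝ) : ℝ≥0∞ := ENNReal.ofReal y ^ (-1 - a)
  let g (y : ℝ) : ℝ≥0∞ := ENNReal.ofReal y ^ (1 + a) * f y
  have rpow_add {y : ℝ} (hy : 0 < y) (s t : ℝ) :
      ENNReal.ofReal y ^ (s + t) = ENNReal.ofReal y ^ s * ENNReal.ofReal y ^ t :=
    ENNReal.rpow_add s t (ENNReal.ofReal_pos.2 hy).ne' ENNReal.ofReal_ne_top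
  have factor {y : ℝ} (hy : 0 < y) : f y = w y * g y := by
    rw [← mul_assoc, ← rpow_add hy, show -1 - a + (1 + a) = 0 by ring, ENNReal.rpow_zero, one_mul]
  have collect {y : ℝ} (hy : 0 < y) : ENNReal.ofReal y ^ a * (w y * g y ^ p) =
      ENNReal.ofReal y ^ (a * p - 1) * (f y * ENNReal.ofReal y) ^ p := by
    simp only [w, g]
    rw [ENNReal.mul_rpow_of_nonneg _ _ hp0, ENNReal.mul_rpow_of_nonneg _ _ hp0,
      mul_comm (f y ^ p), ← ENNReal.rpow_mul, ← mul_assoc, ← mul_assoc, ← mul_assoc, ← rpow_add hy,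
      ← rpow_add hy, ← rpow_add hy]
    ring_nf
  calc ∫⁻ x in Ioi 0, ENNReal.ofReal x ^ (a * p - 1) * (∫⁻ y in Ioi x, f y) ^ p
      = ∫⁻ x in Ioi 0, ENNReal.ofReal x ^ (a * p - 1) * (∫⁻ y in Ioi x, w y * g y) ^ p :=
        setLIntegral_congr_fun measurableSet_Ioi fun x hx => by
          rw [setLIntegral_congr_fun measurableSet_Ioi fun y hy => factor (lt_trans hx hy)]
    _ ≤ ∫⁻ y in Ioi 0, (∫⁻ x in Ioo 0 y, ENNReal.ofReal x ^ (a * p - 1) *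
          (∫⁻ z in Ioi x, w z) ^ (p - 1)) * (w y * g y ^ p) :=
        lintegral_mul_rpow_lintegral_Ioi_le (by fun_prop) (by fun_prop) (by fun_prop) hp
    _ = ∫⁻ y in Ioi 0, (ENNReal.ofReal a)⁻¹ ^ p *
          (ENNReal.ofReal y ^ (a * p - 1) * (f y * ENNReal.ofReal y) ^ p) :=
        setLIntegral_congr_fun measurableSet_Ioi fun y hy => by
          rw [lintegral_Ioo_zero_rpow_mul_rpow_lintegral_Ioi ha p hy, mul_assoc, collect hy]
    _ = _ := lintegral_const_mul'' _ (by fun_prop)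

end PowerWeights

theorem stmt_1_general (p β : ℝ) (hp : 1 ≤ p) (hβ : -(1 / p) < β)
    (f : ℝ → ℝ≥0∞) (hf : AEMeasurable f (volume.restrict (Ioi 0))) :
    (∫⁻ x in Ioi (0 : ℝ), (∫⁻ y in Ioi x, ENNReal.ofReal (x ^ β) * f y) ^ p) ^ (1 / p) ≤
      ENNReal.ofReal (p / (β * p + 1)) *
        (∫⁻ x in Ioi (0 : ℝ), (f x * ENNReal.ofReal (x ^ (β + 1))) ^ p) ^ (1 / p) := by
  have hp0 : 0 < p := by positivity
  have ha : 0 < β + 1 / p := by linarith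
  have exponent : (β + 1 / p) * p - 1 = β * p := by field_simp; ring
  have constant : (ENNReal.ofReal (β + 1 / p))⁻¹ = ENNReal.ofReal (p / (β * p + 1)) := by
    rw [← ENNReal.ofReal_inv_of_pos ha]
    congr 1
    field_simp
  have lhs : ∀ x ∈ Ioi (0 : ℝ), (∫⁻ y in Ioi x, ENNReal.ofReal (x ^ β) * f y) ^ p =
      ENNReal.ofReal x ^ (β * p) * (∫⁻ y in Ioi x, f y) ^ p := fun x hx => by
    rw [lintegral_const_mul' _ _ ENNReal.ofReal_ne_top, ENNReal.mul_rpow_of_nonneg _ _ hp0.le,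
      ← ENNReal.ofReal_rpow_of_pos hx, ENNReal.rpow_mul]
  have rhs : ∀ x ∈ Ioi (0 : ℝ), (f x * ENNReal.ofReal (x ^ (β + 1))) ^ p =
      ENNReal.ofReal x ^ (β * p) * (f x * ENNReal.ofReal x) ^ p := fun x hx => by
    rw [Real.rpow_add_one (ne_of_gt hx), ENNReal.ofReal_mul (Real.rpow_nonneg (le_of_lt hx) _),
      mul_left_comm, ENNReal.mul_rpow_of_nonneg _ _ hp0.le, ← ENNReal.ofReal_rpow_of_pos hx,
      ENNReal.rpow_mul]
  have hardy := lintegral_rpow_mul_rpow_lintegral_Ioi_le ha hp hf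
  rw [exponent, constant, ← setLIntegral_congr_fun measurableSet_Ioi lhs,
    ← setLIntegral_congr_fun measurableSet_Ioi rhs] at hardy
  rw [one_div, ENNReal.rpow_inv_le_iff hp0, ENNReal.mul_rpow_of_nonneg _ _ hp0.le,
    ENNReal.rpow_inv_rpow hp0.ne']
  exact hardy

/-- **classical Hardy inequality.** Let `β > -1/p` with `p ∈ [1,∞)`, and let
`f` be a non-negative measurable function on `(0,∞)`.  Then
`(∫_0^∞ (∫_x^∞ x^β f(y) dy)^p dx)^{1/p} ≤ (p/(βp+1)) (∫_0^∞ (f(x) x^{β+1})^p dx)^{1/p}`,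
both sides interpreted in `ℝ≥0∞` via Lebesgue integrals. -/
theorem stmt_1 (p β : ℝ) (hp : 1 ≤ p) (hβ : -(1 / p) < β)
    (f : ℝ → ℝ) (hf : Measurable f) (hf0 : ∀ x ∈ Set.Ioi (0 : ℝ), 0 ≤ f x) :
    (∫⁻ x in Set.Ioi (0 : ℝ),
        (∫⁻ y in Set.Ioi x, ENNReal.ofReal (x ^ β) * ENNReal.ofReal (f y)) ^ p) ^ (1 / p) ≤
      ENNReal.ofReal (p / (β * p + 1)) *
        (∫⁻ x in Set.Ioi (0 : ℝ), ENNReal.ofReal (f x * x ^ (β + 1)) ^ p) ^ (1 / p) := by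
  have ofReal_mul : ∀ x ∈ Ioi (0 : ℝ), ENNReal.ofReal (f x * x ^ (β + 1)) ^ p =
      (ENNReal.ofReal (f x) * ENNReal.ofReal (x ^ (β + 1))) ^ p :=
    fun x hx => by rw [ENNReal.ofReal_mul (hf0 x hx)]
  rw [setLIntegral_congr_fun measurableSet_Ioi ofReal_mul]
  exact stmt_1_general p β hp hβ _ hf.ennreal_ofReal.aemeasurable
end

section
/- For every real number α > 0, the series ∑_{k=0}^∞ α(α + 2) / (2((k+1)α + 1)²) converges and ∑_{k=0}^∞ α(α + 2) / (2((k+1)α + 1)²) ≤ π²/4. -/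
/-!
The midpoint bound for the convex function `1 / x ^ 2` compares the sum of `1 / (a + k * d) ^ 2`
with a telescoping sum, which gives `(d * (a - d / 2))⁻¹` as an upper bound. At `a = α + 1` and
`d = α` this is `(α * (α + 2) / 2)⁻¹`, the inverse of the constant factor of the series. Hence the
sum is at most `1`, and `1 < π ^ 2 / 4`.
-/

section LinearOrderedField

variable {K : Type*} [Field K] [LinearOrder K] [IsStrictOrderedRing K]

lemma sub_div_midpoint_sq_le_inv_sub_inv {u v : K} (hu : 0 < u) (huv : u ≤ v) :
    (v - u) / ((u + v) / 2) ^ 2 ≤ u⁻¹ - v⁻¹ := by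
  have hv : 0 < v := hu.trans_le huv
  have am_gm : u * v ≤ ((u + v) / 2) ^ 2 := by linarith [sq_nonneg (u - v)]
  calc (v - u) / ((u + v) / 2) ^ 2
      ≤ (v - u) / (u * v) :=
        div_le_div_of_nonneg_left (sub_nonneg.2 huv) (mul_pos hu hv) am_gm
    _ = u⁻¹ - v⁻¹ := (inv_sub_inv hu.ne' hv.ne').symm

/-- Multiplying by `d` makes the denominators positive for either sign of `d`. -/
lemma inv_sq_le_inv_sub_inv {d x : K} (hx : 0 < d * (x - d / 2)) :
    (x ^ 2)⁻¹ ≤ (d * (x - d / 2))⁻¹ - (d * (x + d / 2))⁻¹ := by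
  have hd : d ≠ 0 := left_ne_zero_of_mul hx.ne'
  have hle : d * (x - d / 2) ≤ d * (x + d / 2) := by linarith [sq_nonneg d]
  calc (x ^ 2)⁻¹ = d ^ 2 / (d * x) ^ 2 := by
        rw [mul_pow, div_mul_cancel_left₀ (pow_ne_zero 2 hd)]
    _ = (d * (x + d / 2) - d * (x - d / 2)) /
          ((d * (x - d / 2) + d * (x + d / 2)) / 2) ^ 2 := by
        congr 1 <;> ring
    _ ≤ (d * (x - d / 2))⁻¹ - (d * (x + d / 2))⁻¹ :=
        sub_div_midpoint_sq_le_inv_sub_inv hx hle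

lemma sum_range_inv_add_mul_sq_le {a d : K} (h : 0 < d * (a - d / 2)) (n : ℕ) :
    ∑ k ∈ Finset.range n, ((a + k * d) ^ 2)⁻¹ ≤ (d * (a - d / 2))⁻¹ := by
  let u : ℕ → K := fun k ↦ d * (a + k * d - d / 2)
  have u_pos (k : ℕ) : 0 < u k := by
    have : u k = d * (a - d / 2) + k * d ^ 2 := by ring
    rw [this]
    positivity
  have u_succ (k : ℕ) : u (k + 1) = d * (a + k * d + d / 2) := by
    simp only [u, Nat.cast_succ]
    ring
  calc ∑ k ∈ Finset.range n, ((a + k * d) ^ 2)⁻¹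
      ≤ ∑ k ∈ Finset.range n, ((u k)⁻¹ - (u (k + 1))⁻¹) :=
        Finset.sum_le_sum fun k _ ↦ u_succ k ▸ inv_sq_le_inv_sub_inv (u_pos k)
    _ = (u 0)⁻¹ - (u n)⁻¹ := Finset.sum_range_sub' (fun k ↦ (u k)⁻¹) n
    _ ≤ (u 0)⁻¹ := sub_le_self _ (inv_nonneg.2 (u_pos n).le)
    _ = (d * (a - d / 2))⁻¹ := by simp only [u, Nat.cast_zero, zero_mul, add_zero]

end LinearOrderedField

section Real

variable {a d : ℝ}

lemma summable_inv_add_mul_sq (h : 0 < d * (a - d / 2)) :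
    Summable fun k : ℕ ↦ ((a + k * d) ^ 2)⁻¹ :=
  summable_of_sum_range_le (fun _ ↦ by positivity) (sum_range_inv_add_mul_sq_le h)

lemma tsum_inv_add_mul_sq_le (h : 0 < d * (a - d / 2)) :
    ∑' k : ℕ, ((a + k * d) ^ 2)⁻¹ ≤ (d * (a - d / 2))⁻¹ :=
  Real.tsum_le_of_sum_range_le (fun _ ↦ by positivity) (sum_range_inv_add_mul_sq_le h)

end Real

lemma one_le_pi_sq_div_four : 1 ≤ Real.pi ^ 2 / 4 := by
  nlinarith [Real.two_le_pi]

theorem stmt_8_general (α : ℝ) (hα : 0 < α * (α + 2)) :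
    Summable (fun k : ℕ => α * (α + 2) / (2 * (((k : ℝ) + 1) * α + 1) ^ 2)) ∧
      ∑' k : ℕ, α * (α + 2) / (2 * (((k : ℝ) + 1) * α + 1) ^ 2) ≤ 1 := by
  have hc : 0 < α * (α + 1 - α / 2) := by linarith
  have term_eq (k : ℕ) : α * (α + 2) / (2 * (((k : ℝ) + 1) * α + 1) ^ 2) =
      α * (α + 1 - α / 2) * ((α + 1 + k * α) ^ 2)⁻¹ := by
    rw [← div_div, div_eq_mul_inv]
    ring
  simp only [term_eq, tsum_mul_left]
  refine ⟨(summable_inv_add_mul_sq hc).mul_left _, ?_⟩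
  calc α * (α + 1 - α / 2) * ∑' k : ℕ, ((α + 1 + k * α) ^ 2)⁻¹
      ≤ α * (α + 1 - α / 2) * (α * (α + 1 - α / 2))⁻¹ :=
        mul_le_mul_of_nonneg_left (tsum_inv_add_mul_sq_le hc) hc.le
    _ = 1 := mul_inv_cancel₀ hc.ne'

/-- For every real `α > 0`, the series `∑_{k=0}^∞ α(α+2)/(2((k+1)α+1)²)`
converges and its sum is at most `π²/4`. -/
theorem stmt_8 (α : ℝ) (hα : 0 < α) :
    Summable (fun k : ℕ => α * (α + 2) / (2 * (((k : ℝ) + 1) * α + 1) ^ 2)) ∧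
      ∑' k : ℕ, α * (α + 2) / (2 * (((k : ℝ) + 1) * α + 1) ^ 2) ≤ Real.pi ^ 2 / 4 :=
  (stmt_8_general α (by positivity)).imp_right (·.trans one_le_pi_sq_div_four)
end

section
/- Let {U_i}_{i ∈ I} be a family of open subsets of ℝⁿ such that each U_i has the ε-ball property for some fixed ε > 0, and such that no point of ℝⁿ is contained in more than N of the sets U_i. Then for every δ > 0 there exists ξ ∈ ℕ depending only on n, ε, N and δ such that every open ball B of radius r < δ satisfies #{i ∈ I : B ∩ U_i ≠ ∅} ≤ ξ. -/
/-!
If `ball z r` meets `U i`, the ball property gives an `ε`-ball inside `U i` whose centre lies in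
`ball z (r + ε)`. Cover `ball z (r + ε)` by `k` balls of radius `ε`: the centre lies in one of
them, so `U i` contains one of the `k` centres of the covering. Each of these belongs to at most
`N` of the sets, and `k` does not depend on `z` because coverings can be translated.
-/

open Metric

/-- The `ε`-ball property of a subset of a metric space: it is a union of open balls of radius
`ε`. The balls need not be centred at the points they are required to contain. -/
def HasBallProperty {X : Type*} [PseudoMetricSpace X] (ε : ℝ) (U : Set X) : Prop :=
  ∀ x ∈ U, ∃ c, x ∈ ball c ε ∧ ball c ε ⊆ U

theorem HasBallProperty.exists_mem_of_ball_subset_iUnion_ball {X : Type*} [PseudoMetricSpace X]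
    {ε r : ℝ} {U t : Set X} {z : X} (hU : HasBallProperty ε U)
    (hcover : ball z (r + ε) ⊆ ⋃ p ∈ t, ball p ε) (hmeet : (ball z r ∩ U).Nonempty) :
    ∃ p ∈ t, p ∈ U := by
  obtain ⟨x, hxz, hxU⟩ := hmeet
  obtain ⟨c, hxc, hcU⟩ := hU x hxU
  have hc : c ∈ ball z (r + ε) :=
    mem_ball'.2 (dist_lt_add_of_nonempty_ball_inter_ball ⟨x, hxz, hxc⟩)
  obtain ⟨p, hpt, hcp⟩ := Set.mem_iUnion₂.1 (hcover hc)
  exact ⟨p, hpt, hcU (mem_ball_comm.1 hcp)⟩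

theorem encard_setOf_exists_mem_le {X ι : Type*} {U : ι → Set X} {N : ℕ∞}
    (hN : ∀ x, {i | x ∈ U i}.encard ≤ N) (t : Finset X) :
    {i | ∃ p ∈ t, p ∈ U i}.encard ≤ t.card * N :=
  calc {i | ∃ p ∈ t, p ∈ U i}.encard
      = (⋃ p ∈ t, {i | p ∈ U i}).encard := by congr 1; ext i; simp
    _ ≤ ∑ p ∈ t, {i | p ∈ U i}.encard := t.set_encard_biUnion_le _
    _ ≤ t.card * N := by simpa using t.sum_le_card_nsmul _ N fun p _ ↦ hN p

theorem encard_setOf_ball_inter_nonempty_le {X ι : Type*} [PseudoMetricSpace X] {ε r : ℝ}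
    {U : ι → Set X} {N : ℕ∞} {z : X} {t : Finset X} (hU : ∀ i, HasBallProperty ε (U i))
    (hN : ∀ x, {i | x ∈ U i}.encard ≤ N) (hcover : ball z (r + ε) ⊆ ⋃ p ∈ t, ball p ε) :
    {i | (ball z r ∩ U i).Nonempty}.encard ≤ t.card * N :=
  (Set.encard_le_encard fun i hi ↦
    (hU i).exists_mem_of_ball_subset_iUnion_ball (t := t) hcover hi).trans
    (encard_setOf_exists_mem_le hN t)

theorem exists_forall_exists_card_eq_and_ball_subset_iUnion_ball (E : Type*)
    [SeminormedAddCommGroup E] [ProperSpace E] (R : ℝ) {ε : ℝ} (hε : 0 < ε) :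
    ∃ k : ℕ, ∀ z : E, ∃ t : Finset E, t.card = k ∧ ball z R ⊆ ⋃ p ∈ t, ball p ε := by
  obtain ⟨s, -, hs, hcover⟩ := (isCompact_closedBall (0 : E) R).finite_cover_balls hε
  lift s to Finset E using hs
  refine ⟨s.card, fun z ↦ ⟨s.map (addLeftEmbedding z), s.card_map _, fun x hx ↦ ?_⟩⟩
  have hxz : x - z ∈ closedBall 0 R :=
    mem_closedBall_zero_iff.2 (mem_ball_iff_norm.1 hx).le
  obtain ⟨p, hps, hxp⟩ := Set.mem_iUnion₂.1 (hcover hxz)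
  refine Set.mem_iUnion₂.2 ⟨z + p, Finset.mem_map_of_mem _ hps, ?_⟩
  rwa [mem_ball_iff_norm, ← sub_sub, ← mem_ball_iff_norm]

theorem stmt_14_general (E : Type*) [SeminormedAddCommGroup E] [ProperSpace E]
    {ε : ℝ} (hε : 0 < ε) (N : ℕ) (δ : ℝ) :
    ∃ ξ : ℕ, ∀ (ι : Type*) (U : ι → Set E),
      (∀ i, HasBallProperty ε (U i)) →
      (∀ x, {i | x ∈ U i}.encard ≤ N) →
      ∀ (z : E) (r : ℝ), r ≤ δ → {i | (ball z r ∩ U i).Nonempty}.encard ≤ ξ := by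
  obtain ⟨k, hk⟩ := exists_forall_exists_card_eq_and_ball_subset_iUnion_ball E (δ + ε) hε
  refine ⟨k * N, fun ι U hU hN z r hr ↦ ?_⟩
  obtain ⟨t, rfl, hcover⟩ := hk z
  have hcover_r : ball z (r + ε) ⊆ ⋃ p ∈ t, ball p ε :=
    (ball_subset_ball (by gcongr)).trans hcover
  exact_mod_cast encard_setOf_ball_inter_nonempty_le hU hN hcover_r

/-- Let `{U_i}` be a family of open subsets of `ℝⁿ`, each with the
`ε`-ball property, with overlap bounded by `N`.  Then for every `δ > 0` there is `ξ ∈ ℕ`,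
depending only on `n`, `ε`, `N` and `δ`, such that every open ball of radius `r < δ`
meets at most `ξ` of the sets `U_i`. -/
theorem stmt_14 (n : ℕ) (ε : ℝ) (hε : 0 < ε) (N : ℕ) (δ : ℝ) (hδ : 0 < δ) :
    ∃ ξ : ℕ, ∀ (ι : Type) (U : ι → Set (EuclideanSpace ℝ (Fin n))),
      (∀ i, IsOpen (U i)) →
      (∀ i, ∀ x ∈ U i, ∃ c, x ∈ Metric.ball c ε ∧ Metric.ball c ε ⊆ U i) →
      (∀ x : EuclideanSpace ℝ (Fin n), {i : ι | x ∈ U i}.encard ≤ N) →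
      ∀ (z : EuclideanSpace ℝ (Fin n)) (r : ℝ), r < δ →
        {i : ι | (Metric.ball z r ∩ U i).Nonempty}.encard ≤ ξ := by
  obtain ⟨ξ, hξ⟩ := stmt_14_general (EuclideanSpace ℝ (Fin n)) hε N δ
  exact ⟨ξ, fun ι U _ hU hN z r hr ↦ hξ ι U hU hN z r hr.le⟩
end
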